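/- Let K = (k_1,…,k_r) be positive integers, not all equal to 1, and let B = {j ∈ {1,…,r} : k_j = 1}. Then in ℝ[T]: Σ_{Π ∈ P(r)} c̄(Π) · H*(K;Π;T) = Σ_{A ⊆ B} Σ_{Δ ∈ P_B({1,…,r}∖A)} c̄(Δ) · (∏_{Q ∈ Δ} ζ(Σ_{q ∈ Q} k_q)) · T^{|A|}, where the outer sum ranges over all subsets A of B (including the empty set), and each block sum Σ_{q ∈ Q} k_q is ≥ 2. -/

import Mathlib

open Finset

open scoped Classical

/-- The Riemann zeta value `ζ(m) = Σ_{n ≥ 1} 1/n^m`. -/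
noncomputable def zetaVal (m : ℕ) : ℝ := ∑' n : ℕ, 1 / ((n : ℝ) + 1) ^ m

/-- `E(k;T) ∈ ℝ[T]`: the constant polynomial `ζ(k)` if `k ≥ 2`, the variable `T` if `k = 1`. -/
noncomputable def Epoly (k : ℕ) : Polynomial ℝ :=
  if k = 1 then Polynomial.X else Polynomial.C (zetaVal k)

/-- The set of partitions of a finite set `S`: sets of nonempty pairwise disjoint
subsets (blocks) of `S` whose union is `S`. -/
noncomputable def partitionsOf {α : Type*} [DecidableEq α] (S : Finset α) :
    Finset (Finset (Finset α)) :=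
  S.powerset.powerset.filter (fun π =>
    (∀ P ∈ π, P.Nonempty) ∧
    (∀ P ∈ π, ∀ Q ∈ π, P ≠ Q → Disjoint P Q) ∧
    π.biUnion id = S)

/-- `P_B(C)`: the set of partitions of `C` none of whose blocks is contained in `B`. -/
noncomputable def partitionsAvoiding {α : Type*} [DecidableEq α] (B C : Finset α) :
    Finset (Finset (Finset α)) :=
  (partitionsOf C).filter (fun Δ => ∀ Q ∈ Δ, ¬ Q ⊆ B)

/-- `c̄(Π) = ∏_{P ∈ Π} (|P| - 1)!`, with `c̄(∅) = 1`. -/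
def cbar {α : Type*} (π : Finset (Finset α)) : ℕ :=
  ∏ P ∈ π, (P.card - 1).factorial

/-- The shuffle-type polynomial `H*(K;Π;T) = ∏_{P ∈ Π} χ_K(P) · E(Σ_{p ∈ P} k_p; T)`,
where `χ_K(P) = 0` if `|P| > 1` and `k_p = 1` for all `p ∈ P`, and `χ_K(P) = 1` otherwise. -/
noncomputable def Hstar {r : ℕ} (k : Fin r → ℕ) (π : Finset (Finset (Fin r))) :
    Polynomial ℝ :=
  ∏ P ∈ π,
    (if 1 < P.card ∧ ∀ p ∈ P, k p = 1 then 0 else 1) * Epoly (∑ p ∈ P, k p)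

/-!
Split a partition `Π` of `S` into the blocks contained in `B` and the others. If `A` is the union
of the former, they form a partition of `A ⊆ B`, while the others form a partition of `S \ A`
avoiding `B`, and every such pair arises exactly once. Since the summand is a product over blocks,
the sum over `Π` factors for each `A`. Among the partitions of `A` only the one into singletons
contributes, namely `T^{|A|}`, because `χ_K` vanishes on larger blocks inside `B = {j | k_j = 1}`.
-/

section FilterUnion

variable {α : Type*} [DecidableEq α] {p : α → Prop} [DecidablePred p] {s t : Finset α}

theorem filter_union_eq_left (hs : ∀ x ∈ s, p x) (ht : ∀ x ∈ t, ¬ p x) : (s ∪ t).filter p = s := by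
  rw [filter_union, filter_true_of_mem hs, filter_false_of_mem ht, union_empty]

theorem filter_not_union_eq_right (hs : ∀ x ∈ s, p x) (ht : ∀ x ∈ t, ¬ p x) :
    (s ∪ t).filter (¬ p ·) = t := by
  rw [union_comm, filter_union_eq_left ht fun x hx => not_not.2 (hs x hx)]

end FilterUnion

section Partitions

variable {α : Type*} [DecidableEq α] {S A B : Finset α} {π ρ Δ : Finset (Finset α)}

theorem mem_partitionsOf :
    π ∈ partitionsOf S ↔
      (∀ P ∈ π, P.Nonempty) ∧ (π : Set (Finset α)).PairwiseDisjoint id ∧ π.biUnion id = S := by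
  rw [partitionsOf, mem_filter, mem_powerset]
  refine and_iff_right_of_imp ?_
  rintro ⟨-, -, rfl⟩ P hP
  exact mem_powerset.2 (subset_biUnion_of_mem id hP)

theorem mem_partitionsAvoiding :
    Δ ∈ partitionsAvoiding B S ↔ Δ ∈ partitionsOf S ∧ ∀ Q ∈ Δ, ¬ Q ⊆ B := by
  rw [partitionsAvoiding, mem_filter]

theorem subset_of_mem_partitionsOf (hπ : π ∈ partitionsOf S) {P : Finset α} (hP : P ∈ π) :
    P ⊆ S :=
  (mem_partitionsOf.1 hπ).2.2 ▸ subset_biUnion_of_mem id hP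

theorem mem_partitionsOf_biUnion_of_subset (hπ : π ∈ partitionsOf S) (hρ : ρ ⊆ π) :
    ρ ∈ partitionsOf (ρ.biUnion id) := by
  obtain ⟨nonempty, disjoint, -⟩ := mem_partitionsOf.1 hπ
  exact mem_partitionsOf.2
    ⟨fun P hP => nonempty P (hρ hP), disjoint.subset (coe_subset.2 hρ), rfl⟩

theorem biUnion_sdiff_of_mem_partitionsOf (hπ : π ∈ partitionsOf S) (hρ : ρ ⊆ π) :
    (π \ ρ).biUnion id = S \ ρ.biUnion id := by
  obtain ⟨-, disjoint, rfl⟩ := mem_partitionsOf.1 hπ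
  have hdisj : Disjoint ((π \ ρ).biUnion id) (ρ.biUnion id) := by
    refine (disjoint_biUnion_left _ _ _).2 fun P hP =>
      (disjoint_biUnion_right _ _ _).2 fun Q hQ => ?_
    obtain ⟨hPπ, hPρ⟩ := mem_sdiff.1 hP
    exact disjoint hPπ (hρ hQ) (ne_of_mem_of_not_mem hQ hPρ).symm
  rw [← hdisj.sdiff_eq_left, ← union_sdiff_right, ← union_biUnion, sdiff_union_of_subset hρ]

theorem union_mem_partitionsOf_union (hρ : ρ ∈ partitionsOf A) (hΔ : Δ ∈ partitionsOf S)
    (hAS : Disjoint A S) : ρ ∪ Δ ∈ partitionsOf (A ∪ S) := by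
  obtain ⟨nonempty_ρ, disjoint_ρ, union_ρ⟩ := mem_partitionsOf.1 hρ
  obtain ⟨nonempty_Δ, disjoint_Δ, union_Δ⟩ := mem_partitionsOf.1 hΔ
  refine mem_partitionsOf.2 ⟨?_, ?_, by rw [union_biUnion, union_ρ, union_Δ]⟩
  · simpa only [forall_mem_union] using And.intro nonempty_ρ nonempty_Δ
  · rw [coe_union]
    exact disjoint_ρ.union disjoint_Δ fun P hP Q hQ _ =>
      hAS.mono (subset_of_mem_partitionsOf hρ hP) (subset_of_mem_partitionsOf hΔ hQ)

theorem image_singleton_mem_partitionsOf (A : Finset α) :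
    A.image singleton ∈ partitionsOf A := by
  refine mem_partitionsOf.2 ⟨?_, ?_, by simp [image_biUnion]⟩
  · simp
  · rw [coe_image]
    rintro _ ⟨a, -, rfl⟩ _ ⟨b, -, rfl⟩ hab
    exact disjoint_singleton.2 fun h => hab (congrArg singleton h)

theorem eq_image_singleton_of_card_le_one (hπ : π ∈ partitionsOf A)
    (hcard : ∀ P ∈ π, #P ≤ 1) : π = A.image singleton := by
  obtain ⟨nonempty, -, rfl⟩ := mem_partitionsOf.1 hπ
  have block_eq : ∀ P ∈ π, ∃ a, P = {a} := fun P hP =>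
    card_eq_one.1 ((hcard P hP).antisymm (nonempty P hP).card_pos)
  ext P
  simp only [mem_image, mem_biUnion, id]
  constructor
  · intro hP
    obtain ⟨a, rfl⟩ := block_eq P hP
    exact ⟨a, ⟨{a}, hP, mem_singleton_self a⟩, rfl⟩
  · rintro ⟨a, ⟨Q, hQ, haQ⟩, rfl⟩
    obtain ⟨b, rfl⟩ := block_eq Q hQ
    rwa [mem_singleton.1 haQ]

/-- The union of the blocks of `π` contained in `B`. It is the set `A` of the decomposition: for a
partition `π` of `S`, the remaining blocks form a partition of `S \ A` avoiding `B`. -/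
noncomputable def unionBlocksWithin (B : Finset α) (π : Finset (Finset α)) : Finset α :=
  (π.filter (· ⊆ B)).biUnion id

theorem unionBlocksWithin_subset (B : Finset α) (π : Finset (Finset α)) :
    unionBlocksWithin B π ⊆ B :=
  biUnion_subset.2 fun _ hP => (mem_filter.1 hP).2

theorem filter_subset_mem_partitionsOf (hπ : π ∈ partitionsOf S) (B : Finset α) :
    π.filter (· ⊆ B) ∈ partitionsOf (unionBlocksWithin B π) :=
  mem_partitionsOf_biUnion_of_subset hπ (filter_subset _ π)

theorem filter_not_subset_mem_partitionsAvoiding (hπ : π ∈ partitionsOf S) (B : Finset α) :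
    π.filter (¬ · ⊆ B) ∈ partitionsAvoiding B (S \ unionBlocksWithin B π) := by
  refine mem_partitionsAvoiding.2 ⟨?_, fun Q hQ => (mem_filter.1 hQ).2⟩
  rw [unionBlocksWithin, ← biUnion_sdiff_of_mem_partitionsOf hπ (filter_subset _ π), ← filter_not]
  exact mem_partitionsOf_biUnion_of_subset hπ (filter_subset _ π)

variable {R : Type*} [CommSemiring R]

theorem sum_prod_unionBlocksWithin_eq (w : Finset α → R) (hAB : A ⊆ B) (hAS : A ⊆ S) :
    ∑ π ∈ partitionsOf S with unionBlocksWithin B π = A, ∏ P ∈ π, w P =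
      (∑ ρ ∈ partitionsOf A, ∏ P ∈ ρ, w P) *
        ∑ Δ ∈ partitionsAvoiding B (S \ A), ∏ Q ∈ Δ, w Q := by
  have subset_B : ∀ ρ ∈ partitionsOf A, ∀ P ∈ ρ, P ⊆ B := fun ρ hρ P hP =>
    (subset_of_mem_partitionsOf hρ hP).trans hAB
  rw [sum_mul_sum, ← sum_product']
  refine sum_nbij' (fun π => (π.filter (· ⊆ B), π.filter (¬ · ⊆ B))) (fun p => p.1 ∪ p.2)
    ?_ ?_ ?_ ?_ ?_
  · intro π hπ
    obtain ⟨hπS, rfl⟩ := mem_filter.1 hπ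
    exact mem_product.2 ⟨filter_subset_mem_partitionsOf hπS B,
      filter_not_subset_mem_partitionsAvoiding hπS B⟩
  · rintro ⟨ρ, Δ⟩ hp
    obtain ⟨hρ, hΔ⟩ := mem_product.1 hp
    obtain ⟨hΔS, hΔB⟩ := mem_partitionsAvoiding.1 hΔ
    refine mem_filter.2 ⟨?_, ?_⟩
    · rw [← union_sdiff_of_subset hAS]
      exact union_mem_partitionsOf_union hρ hΔS disjoint_sdiff
    · rw [unionBlocksWithin, filter_union_eq_left (subset_B ρ hρ) hΔB]
      exact (mem_partitionsOf.1 hρ).2.2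
  · exact fun π _ => filter_union_filter_not_eq _ π
  · rintro ⟨ρ, Δ⟩ hp
    obtain ⟨hρ, hΔ⟩ := mem_product.1 hp
    have hΔB := (mem_partitionsAvoiding.1 hΔ).2
    exact Prod.ext (filter_union_eq_left (subset_B ρ hρ) hΔB)
      (filter_not_union_eq_right (subset_B ρ hρ) hΔB)
  · exact fun π _ => (prod_filter_mul_prod_filter_not π (· ⊆ B) w).symm

theorem sum_partitionsOf_prod_eq_sum_powerset (w : Finset α → R) (hBS : B ⊆ S) :
    ∑ π ∈ partitionsOf S, ∏ P ∈ π, w P =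
      ∑ A ∈ B.powerset, (∑ ρ ∈ partitionsOf A, ∏ P ∈ ρ, w P) *
        ∑ Δ ∈ partitionsAvoiding B (S \ A), ∏ Q ∈ Δ, w Q := by
  rw [← sum_fiberwise_of_maps_to fun π _ => mem_powerset.2 (unionBlocksWithin_subset B π)]
  refine sum_congr rfl fun A hA => ?_
  have hAB := mem_powerset.1 hA
  exact sum_prod_unionBlocksWithin_eq w hAB (hAB.trans hBS)

theorem sum_partitionsOf_prod_eq_prod_singleton (w : Finset α → R)
    (hw : ∀ P ⊆ A, 1 < #P → w P = 0) :
    ∑ ρ ∈ partitionsOf A, ∏ P ∈ ρ, w P = ∏ a ∈ A, w {a} := by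
  rw [sum_eq_single_of_mem _ (image_singleton_mem_partitionsOf A),
    prod_image singleton_injective.injOn]
  intro ρ hρ hne
  obtain ⟨P, hP, hcard⟩ : ∃ P ∈ ρ, 1 < #P := by
    contrapose! hne
    exact eq_image_singleton_of_card_le_one hρ hne
  exact prod_eq_zero hP (hw P (subset_of_mem_partitionsOf hρ hP) hcard)

end Partitions

theorem two_le_sum_of_exists_ne_one {ι : Type*} {k : ι → ℕ} {Q : Finset ι}
    (hk : ∀ q ∈ Q, 1 ≤ k q) (hQ : ∃ q ∈ Q, k q ≠ 1) : 2 ≤ ∑ q ∈ Q, k q := by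
  obtain ⟨q, hq, hne⟩ := hQ
  have two_le : 2 ≤ k q := by have := hk q hq; omega
  exact two_le.trans (single_le_sum (fun _ _ => Nat.zero_le _) hq)

/-- The factor `(|P| - 1)! · χ_K(P) · E(Σ_{p ∈ P} k_p; T)` which a block `P` of a partition `Π`
contributes to `c̄(Π) · H*(K;Π;T)`. -/
noncomputable def blockWeight {ι : Type*} (k : ι → ℕ) (P : Finset ι) : Polynomial ℝ :=
  ((#P - 1).factorial : Polynomial ℝ) *
    ((if 1 < #P ∧ ∀ p ∈ P, k p = 1 then 0 else 1) * Epoly (∑ p ∈ P, k p))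

section BlockWeight

variable {ι : Type*} {k : ι → ℕ} {P : Finset ι}

theorem cbar_mul_Hstar {r : ℕ} (k : Fin r → ℕ) (π : Finset (Finset (Fin r))) :
    (cbar π : Polynomial ℝ) * Hstar k π = ∏ P ∈ π, blockWeight k P := by
  rw [cbar, Hstar, Nat.cast_prod, ← prod_mul_distrib]
  -- The two sides decide `∀ p ∈ P, k p = 1` by different instances.
  exact prod_congr rfl fun P _ => by rw [blockWeight]; congr!

theorem blockWeight_eq_zero (hcard : 1 < #P) (hP : ∀ p ∈ P, k p = 1) : blockWeight k P = 0 := by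
  rw [blockWeight, if_pos ⟨hcard, hP⟩, zero_mul, mul_zero]

theorem blockWeight_singleton {a : ι} (ha : k a = 1) : blockWeight k {a} = Polynomial.X := by
  simp [blockWeight, Epoly, ha]

theorem blockWeight_of_exists_ne_one (hk : ∀ p ∈ P, 1 ≤ k p) (hP : ∃ p ∈ P, k p ≠ 1) :
    blockWeight k P =
      ((#P - 1).factorial : Polynomial ℝ) * Polynomial.C (zetaVal (∑ p ∈ P, k p)) := by
  have sum_ne_one : ∑ p ∈ P, k p ≠ 1 := by
    have := two_le_sum_of_exists_ne_one hk hP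
    omega
  have not_all_one : ¬ (1 < #P ∧ ∀ p ∈ P, k p = 1) := by
    rintro ⟨-, hone⟩
    obtain ⟨p, hp, hne⟩ := hP
    exact hne (hone p hp)
  rw [blockWeight, if_neg not_all_one, one_mul, Epoly, if_neg sum_ne_one]

theorem prod_blockWeight_of_exists_ne_one {Δ : Finset (Finset ι)}
    (hk : ∀ Q ∈ Δ, ∀ q ∈ Q, 1 ≤ k q) (hΔ : ∀ Q ∈ Δ, ∃ q ∈ Q, k q ≠ 1) :
    ∏ Q ∈ Δ, blockWeight k Q =
      (cbar Δ : Polynomial ℝ) * ∏ Q ∈ Δ, Polynomial.C (zetaVal (∑ q ∈ Q, k q)) := by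
  rw [cbar, Nat.cast_prod, ← prod_mul_distrib]
  exact prod_congr rfl fun Q hQ => blockWeight_of_exists_ne_one (hk Q hQ) (hΔ Q hQ)

theorem sum_partitionsOf_prod_blockWeight_of_eq_one [DecidableEq ι] {A : Finset ι}
    (hA : ∀ a ∈ A, k a = 1) :
    ∑ ρ ∈ partitionsOf A, ∏ P ∈ ρ, blockWeight k P = Polynomial.X ^ #A := by
  rw [sum_partitionsOf_prod_eq_prod_singleton (blockWeight k) fun P hPA hcard =>
    blockWeight_eq_zero hcard fun p hp => hA p (hPA hp)]
  exact prod_eq_pow_card fun a ha => blockWeight_singleton (hA a ha)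

end BlockWeight

/-- For an index `K` of positive integers, not all `1`, and `B = {j : k_j = 1}`:
`Σ_{Π ∈ P(r)} c̄(Π) H*(K;Π;T)
  = Σ_{A ⊆ B} Σ_{Δ ∈ P_B({1,…,r}∖A)} c̄(Δ) (∏_{Q ∈ Δ} ζ(Σ_{q ∈ Q} k_q)) T^{|A|}`,
where each block sum `Σ_{q ∈ Q} k_q` is at least `2`. -/
theorem shuffle_sum_decomposition {r : ℕ} (k : Fin r → ℕ) (hk : ∀ i, 1 ≤ k i)
    (hK : ¬ ∀ i, k i = 1)
    (B : Finset (Fin r)) (hB : B = Finset.univ.filter (fun j => k j = 1)) :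
    (∀ A ∈ B.powerset, ∀ Δ ∈ partitionsAvoiding B (Finset.univ \ A),
      ∀ Q ∈ Δ, 2 ≤ ∑ q ∈ Q, k q) ∧
    ∑ π ∈ partitionsOf (Finset.univ : Finset (Fin r)),
        (cbar π : Polynomial ℝ) * Hstar k π =
      ∑ A ∈ B.powerset,
        ∑ Δ ∈ partitionsAvoiding B (Finset.univ \ A),
          (cbar Δ : Polynomial ℝ) *
            (∏ Q ∈ Δ, Polynomial.C (zetaVal (∑ q ∈ Q, k q))) *
              Polynomial.X ^ A.card := by
  have mem_B_iff : ∀ a, a ∈ B ↔ k a = 1 := by simp [hB]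
  have exists_ne_one : ∀ A, ∀ Δ ∈ partitionsAvoiding B (univ \ A), ∀ Q ∈ Δ, ∃ q ∈ Q, k q ≠ 1 := by
    intro A Δ hΔ Q hQ
    obtain ⟨q, hq, hqB⟩ := not_subset.1 ((mem_partitionsAvoiding.1 hΔ).2 Q hQ)
    exact ⟨q, hq, mt (mem_B_iff q).2 hqB⟩
  refine ⟨fun A _ Δ hΔ Q hQ =>
    two_le_sum_of_exists_ne_one (fun q _ => hk q) (exists_ne_one A Δ hΔ Q hQ), ?_⟩
  simp only [cbar_mul_Hstar]
  rw [sum_partitionsOf_prod_eq_sum_powerset (blockWeight k) (subset_univ B)]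
  refine sum_congr rfl fun A hA => ?_
  have hA_one : ∀ a ∈ A, k a = 1 := fun a ha => (mem_B_iff a).1 (mem_powerset.1 hA ha)
  rw [sum_partitionsOf_prod_blockWeight_of_eq_one hA_one, mul_comm, sum_mul]
  refine sum_congr rfl fun Δ hΔ => ?_
  rw [prod_blockWeight_of_exists_ne_one (fun _ _ q _ => hk q) (exists_ne_one A Δ hΔ)]
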